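/- Let β* be a global minimizer of P over ℝ^p, with clusters C*_1, …, C*_{m*} (C*_i = {j : |β*_j| = c*_i} for the distinct values c*_1 > … > c*_{m*} ≥ 0 of |β*|). Let σ be a permutation sorting |β*| nonincreasingly and set w_i = Σ_{j∈C*_i} λ_{σ⁻¹(j)}. Then the vector z* = (c*_1, …, c*_{m*}) minimizes over z ∈ ℝ^{m*} the separable objective (1/2)‖y − X Σ_{i=1}^{m*} Σ_{j∈C*_i} z_i sign(β*_j) e_j‖² + Σ_{i=1}^{m*} |z_i| · w_i, where (e_j) is the canonical basis of ℝ^p. -/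

import Mathlib

open Finset Filter

noncomputable section

/-- The sign of a real number, with the convention `sgn 0 = 1`. -/
def sgn (t : ℝ) : ℝ := if t < 0 then -1 else 1

/-- A permutation sorting the absolute values of `β` in nonincreasing order. -/
def sortPerm {p : ℕ} (β : Fin p → ℝ) : Equiv.Perm (Fin p) :=
  (Fin.revPerm).trans (Tuple.sort fun j => |β j|)

/-- The sorted ℓ₁ norm `J(β) = Σ_j λ_j |β|_(j)`. -/
def sortedL1 {p : ℕ} (lam β : Fin p → ℝ) : ℝ :=
  ∑ j, lam j * |β (sortPerm β j)|

/-- `β(z)`: the vector obtained from `β` by replacing entries of the cluster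
`{i : |β i| = ck}` by `sign(β i) * z`. -/
def cupd {p : ℕ} (β : Fin p → ℝ) (ck z : ℝ) : Fin p → ℝ :=
  fun i => if |β i| = ck then sgn (β i) * z else β i

/-- The partial sorted ℓ₁ norm `H(z) = J(β(z))`. -/
def Hfun {p : ℕ} (lam β : Fin p → ℝ) (ck : ℝ) (z : ℝ) : ℝ :=
  sortedL1 lam (cupd β ck z)

/-- `S(w) = Σ_{j ∈ C(w)} λ_{(j)⁻_w}`, where `C(w) = {j : |β(w)_j| = |w|}`. -/
def Sval {p : ℕ} (lam β : Fin p → ℝ) (ck : ℝ) (w : ℝ) : ℝ :=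
  ∑ j, if |cupd β ck w j| = |w| then lam ((sortPerm (cupd β ck w))⁻¹ j) else 0

/-- squared Euclidean norm -/
def sqnorm {n : ℕ} (v : Fin n → ℝ) : ℝ := ∑ i, (v i) ^ 2

/-- `G(z) = (1/2)‖y − Xβ(z)‖² + H(z)`. -/
def Gfun {n p : ℕ} (lam : Fin p → ℝ) (X : Matrix (Fin n) (Fin p) ℝ) (y : Fin n → ℝ)
    (β : Fin p → ℝ) (ck : ℝ) (z : ℝ) : ℝ :=
  (1/2) * sqnorm (fun i => y i - ∑ j, X i j * cupd β ck z j) + Hfun lam β ck z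

/-- `x̃ = Σ_{j ∈ C_k} sign(β_j) X_{:j}`. -/
def xtil {n p : ℕ} (X : Matrix (Fin n) (Fin p) ℝ) (β : Fin p → ℝ) (ck : ℝ) : Fin n → ℝ :=
  fun i => ∑ j, if |β j| = ck then sgn (β j) * X i j else 0

/-- `γ = c_k ω + x̃ᵀ r` where `r = y − Xβ` and `ω = ‖x̃‖²`. -/
def gam {n p : ℕ} (X : Matrix (Fin n) (Fin p) ℝ) (y : Fin n → ℝ) (β : Fin p → ℝ) (ck : ℝ) : ℝ :=
  ck * sqnorm (xtil X β ck) + ∑ i, xtil X β ck i * (y i - ∑ j, X i j * β j)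

end

/-!
Fix the clusters and signs of `β*` and let only the cluster values `z` vary. For `z` close to `z*`
the values `|z_i|` are still strictly decreasing, so the permutation `σ` still sorts the resulting
vector and the sorted `ℓ₁` norm is exactly `Σ_i |z_i| w_i`. The separable objective thus agrees
with the SLOPE objective near `z*`, which makes `z*` a local minimizer of it. The separable
objective is convex, so `z*` is a global minimizer.
-/

open scoped Topology

theorem abs_sgn (t : ℝ) : |sgn t| = 1 := by
  unfold sgn
  split_ifs <;> simp

theorem abs_mul_sgn (t : ℝ) : |t| * sgn t = t := by
  unfold sgn
  split_ifs with ht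
  · rw [abs_of_neg ht, mul_neg_one, neg_neg]
  · rw [abs_of_nonneg (not_lt.mp ht), mul_one]

theorem sortedL1_eq_sum_of_antitone {p : ℕ} (lam u : Fin p → ℝ) {σ : Equiv.Perm (Fin p)}
    (hσ : Antitone fun j => |u (σ j)|) :
    sortedL1 lam u = ∑ j, lam j * |u (σ j)| := by
  -- `Tuple.sort` sorts in nondecreasing order, hence the comparison with the reversal of `σ`.
  have hrev : Monotone ((fun j => |u j|) ∘ (Fin.revPerm.trans σ : Equiv.Perm (Fin p))) :=
    fun i j hij => hσ (Fin.rev_le_rev.mpr hij)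
  have hsort := Tuple.comp_sort_eq_comp_iff_monotone.mpr hrev
  refine Finset.sum_congr rfl fun j _ => congrArg (lam j * ·) ?_
  simpa [sortPerm] using (congrFun hsort j.rev).symm

theorem isOpen_strictAnti {κ α : Type*} [Finite κ] [Preorder κ] [TopologicalSpace α]
    [LinearOrder α] [OrderClosedTopology α] : IsOpen {f : κ → α | StrictAnti f} := by
  simp only [StrictAnti, Set.ofPred_forall]
  exact isOpen_iInter_of_finite fun i => isOpen_iInter_of_finite fun j =>
    isOpen_iInter_of_finite fun _ => isOpen_lt (continuous_apply j) (continuous_apply i)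

theorem convexOn_sum {𝕜 E β κ : Type*} [Semiring 𝕜] [PartialOrder 𝕜] [AddCommMonoid E]
    [AddCommMonoid β] [PartialOrder β] [IsOrderedAddMonoid β] [SMul 𝕜 E] [DistribSMul 𝕜 β]
    {s : Set E} (hs : Convex 𝕜 s) (t : Finset κ) {f : κ → E → β}
    (hf : ∀ i ∈ t, ConvexOn 𝕜 s (f i)) : ConvexOn 𝕜 s fun x => ∑ i ∈ t, f i x := by
  refine ⟨hs, fun x hx y hy a b ha hb hab => ?_⟩
  simp only [Finset.smul_sum, ← Finset.sum_add_distrib]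
  exact Finset.sum_le_sum fun i hi => (hf i hi).2 hx hy ha hb hab

theorem convexOn_sum_abs_mul {κ : Type*} [Fintype κ] {w : κ → ℝ} (hw : ∀ i, 0 ≤ w i) :
    ConvexOn ℝ Set.univ fun z : κ → ℝ => ∑ i, |z i| * w i :=
  convexOn_sum convex_univ _ fun i _ => by
    have habs : ConvexOn ℝ Set.univ fun z : κ → ℝ => |z i| :=
      convexOn_univ_norm.comp_linearMap (LinearMap.proj i : (κ → ℝ) →ₗ[ℝ] ℝ)
    simpa only [smul_eq_mul, mul_comm] using habs.smul (hw i)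

theorem convexOn_sqnorm {n : ℕ} : ConvexOn ℝ Set.univ (sqnorm (n := n)) :=
  convexOn_sum convex_univ _ fun i _ =>
    (even_two.convexOn_pow (𝕜 := ℝ)).comp_linearMap (LinearMap.proj i : (Fin n → ℝ) →ₗ[ℝ] ℝ)

theorem convexOn_leastSquares {n : ℕ} {α : Type*} [Fintype α] (X : Matrix (Fin n) α ℝ)
    (y : Fin n → ℝ) : ConvexOn ℝ Set.univ fun u : α → ℝ =>
      (1 / 2) * sqnorm (fun i => y i - ∑ j, X i j * u j) :=
  (convexOn_sqnorm.comp_affineMap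
    (AffineMap.const ℝ (α → ℝ) y - X.mulVecLin.toAffineMap)).smul one_half_pos.le

/-- The vector `Σ_i Σ_{j ∈ C_i} z_i s_j e_j` with clusters `C_i = {j : ι j = i}` and signs `s`, as
a linear function of the cluster values `z`. -/
def clusterVector {α κ : Type*} (ι : α → κ) (s : α → ℝ) : (κ → ℝ) →ₗ[ℝ] (α → ℝ) :=
  LinearMap.pi fun j => (LinearMap.proj (ι j)).smulRight (s j)

/-- The weight `Σ_j λ_{σ⁻¹(j)}` of the cluster `{j : b_j = t}`, where `b` stands for the vector of
magnitudes `|β|` and `σ` for a permutation sorting it. -/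
noncomputable def clusterWeight {α : Type*} [Fintype α] (lam b : α → ℝ) (σ : Equiv.Perm α)
    (t : ℝ) : ℝ :=
  ∑ j, if b j = t then lam (σ⁻¹ j) else 0

theorem clusterVector_apply {α κ : Type*} (ι : α → κ) (s : α → ℝ) (z : κ → ℝ) (j : α) :
    clusterVector ι s z j = z (ι j) * s j :=
  rfl

theorem clusterVector_sgn_eq_self {α κ : Type*} {ι : α → κ} {β : α → ℝ} {c : κ → ℝ}
    (hι : ∀ j, |β j| = c (ι j)) : clusterVector ι (fun j => sgn (β j)) c = β := by
  ext j
  rw [clusterVector_apply, ← hι, abs_mul_sgn]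

theorem clusterWeight_nonneg {α : Type*} [Fintype α] {lam : α → ℝ} (hlam : ∀ j, 0 ≤ lam j)
    (b : α → ℝ) (σ : Equiv.Perm α) (t : ℝ) : 0 ≤ clusterWeight lam b σ t :=
  Finset.sum_nonneg fun _ _ => ite_nonneg (hlam _) le_rfl

theorem sum_mul_clusterWeight {α κ : Type*} [Fintype α] [Fintype κ] (lam : α → ℝ) {b : α → ℝ}
    {c : κ → ℝ} (hc : Function.Injective c) {ι : α → κ} (hι : ∀ j, b j = c (ι j))
    (σ : Equiv.Perm α) (a : κ → ℝ) :
    ∑ i, a i * clusterWeight lam b σ (c i) = ∑ j, lam j * a (ι (σ j)) := by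
  classical
  simp only [clusterWeight, hι, hc.eq_iff, Finset.mul_sum]
  rw [Finset.sum_comm, ← Equiv.sum_comp σ]
  simp [mul_comm]

theorem sortedL1_clusterVector {p : ℕ} {κ : Type*} (lam : Fin p → ℝ) {ι : Fin p → κ}
    {s : Fin p → ℝ} (hs : ∀ j, |s j| = 1) {σ : Equiv.Perm (Fin p)} {z : κ → ℝ}
    (hz : Antitone fun j => |z (ι (σ j))|) :
    sortedL1 lam (clusterVector ι s z) = ∑ j, lam j * |z (ι (σ j))| := by
  have habs : ∀ j, |clusterVector ι s z (σ j)| = |z (ι (σ j))| := fun j => by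
    rw [clusterVector_apply, abs_mul, hs, mul_one]
  rw [sortedL1_eq_sum_of_antitone (σ := σ) lam _ (by simpa only [habs] using hz)]
  simp only [habs]

theorem sortedL1_clusterVector_eventuallyEq {p : ℕ} {κ : Type*} [Fintype κ] [LinearOrder κ]
    (lam : Fin p → ℝ) {b s : Fin p → ℝ} (hs : ∀ j, |s j| = 1)
    {c : κ → ℝ} (hc_anti : StrictAnti c) (hc_nonneg : ∀ i, 0 ≤ c i)
    {ι : Fin p → κ} (hι : ∀ j, b j = c (ι j)) {σ : Equiv.Perm (Fin p)}
    (hσ : Antitone (b ∘ σ)) :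
    (fun z => sortedL1 lam (clusterVector ι s z)) =ᶠ[𝓝 c]
      fun z => ∑ i, |z i| * clusterWeight lam b σ (c i) := by
  have hισ : Monotone (ι ∘ σ) := fun i j hij =>
    hc_anti.le_iff_ge.mp (by simpa only [Function.comp_apply, hι] using hσ hij)
  have habs_c : StrictAnti fun i => |c i| := by simpa only [abs_of_nonneg (hc_nonneg _)]
  have habs_cont : Continuous fun (z : κ → ℝ) i => |z i| := by fun_prop
  filter_upwards [habs_cont.continuousAt.preimage_mem_nhds
    (isOpen_strictAnti.mem_nhds habs_c)] with z hz
  rw [sortedL1_clusterVector lam hs (hz.antitone.comp_monotone hισ),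
    sum_mul_clusterWeight lam hc_anti.injective hι]

theorem separable_problem_at_optimum_general {p : ℕ} {κ : Type*} [Fintype κ] [LinearOrder κ]
    {lam : Fin p → ℝ} (hlam : ∀ j, 0 ≤ lam j)
    {f : (Fin p → ℝ) → ℝ} (hf : ConvexOn ℝ Set.univ f)
    {β : Fin p → ℝ} (hβ : IsLocalMin (fun u => f u + sortedL1 lam u) β)
    {c : κ → ℝ} (hc_anti : StrictAnti c) (hc_nonneg : ∀ i, 0 ≤ c i)
    {ι : Fin p → κ} (hι : ∀ j, |β j| = c (ι j))
    {σ : Equiv.Perm (Fin p)} (hσ : Antitone fun j => |β (σ j)|) (z : κ → ℝ) :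
    f (clusterVector ι (fun j => sgn (β j)) c) +
        ∑ i, |c i| * clusterWeight lam (fun j => |β j|) σ (c i) ≤
      f (clusterVector ι (fun j => sgn (β j)) z) +
        ∑ i, |z i| * clusterWeight lam (fun j => |β j|) σ (c i) := by
  set B := clusterVector ι fun j => sgn (β j)
  have hconvex : ConvexOn ℝ Set.univ fun z =>
      f (B z) + ∑ i, |z i| * clusterWeight lam (fun j => |β j|) σ (c i) :=
    (hf.comp_linearMap B).add (convexOn_sum_abs_mul fun i => clusterWeight_nonneg hlam _ σ (c i))
  have hslope : IsLocalMin (fun z => f (B z) + sortedL1 lam (B z)) c := by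
    rw [← clusterVector_sgn_eq_self hι] at hβ
    exact hβ.comp_continuous B.continuous_of_finiteDimensional.continuousAt
  have hagree := (EventuallyEq.refl (𝓝 c) fun z => f (B z)).add
    (sortedL1_clusterVector_eventuallyEq lam (fun j => abs_sgn (β j)) hc_anti hc_nonneg hι hσ)
  exact IsMinOn.of_isLocalMin_of_convex_univ (hagree.isLocalMin_iff.mp hslope) hconvex z

/-- at a global minimizer `β*` of the SLOPE objective with clusters
`C*_i = {j : |β*_j| = c*_i}` (encoded by the cluster-index map `ι`), the vector
`z* = (c*_1, …, c*_{m*})` minimizes the separable objective of Problem (2). Here `σ` is a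
permutation sorting `|β*|` nonincreasingly and `w_i = Σ_{j ∈ C*_i} λ_{σ⁻¹(j)}`. -/
theorem separable_problem_at_optimum
    {n p m : ℕ} (hn : 0 < n) (hp : 0 < p) (hm : 0 < m)
    (lam : Fin p → ℝ)
    (hlam_mono : ∀ i j : Fin p, i ≤ j → lam j ≤ lam i)
    (hlam_nonneg : ∀ j, 0 ≤ lam j)
    (X : Matrix (Fin n) (Fin p) ℝ) (y : Fin n → ℝ)
    (βstar : Fin p → ℝ)
    (h_min : ∀ u : Fin p → ℝ,
      (1 / 2) * sqnorm (fun i => y i - ∑ j, X i j * βstar j) + sortedL1 lam βstar ≤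
      (1 / 2) * sqnorm (fun i => y i - ∑ j, X i j * u j) + sortedL1 lam u)
    (c : Fin m → ℝ) (hc_anti : StrictAnti c) (hc_nonneg : ∀ i, 0 ≤ c i)
    (ι : Fin p → Fin m) (hι : ∀ j, |βstar j| = c (ι j)) (hι_surj : Function.Surjective ι)
    (σ : Equiv.Perm (Fin p))
    (hσ : ∀ i j : Fin p, i ≤ j → |βstar (σ j)| ≤ |βstar (σ i)|) :
    ∀ z : Fin m → ℝ,
      (1 / 2) * sqnorm (fun i => y i - ∑ j, X i j * (c (ι j) * sgn (βstar j))) +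
          ∑ i, |c i| * (∑ j, if |βstar j| = c i then lam (σ⁻¹ j) else 0)
        ≤
      (1 / 2) * sqnorm (fun i => y i - ∑ j, X i j * (z (ι j) * sgn (βstar j))) +
          ∑ i, |z i| * (∑ j, if |βstar j| = c i then lam (σ⁻¹ j) else 0) := by
  exact separable_problem_at_optimum_general hlam_nonneg (convexOn_leastSquares X y)
    (Eventually.of_forall h_min) hc_anti hc_nonneg hι hσ
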